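/- arXiv:1902.07136 — 2 statements merged into one kernel-verified Lean document; each statement's English description precedes it below -/
import Mathlib

section
/- Let P₀ be the 5 × 3 matrix over GF(4) with rows (1,α,0), (α,α²,0), (α,0,α²), (1,0,α), (0,1,1), and let A = [I₅ | D₅ | P₀] be the 5 × 18 matrix over GF(4) obtained by placing the 5 × 5 identity matrix, the matrix D₅, and P₀ side by side. A field F realizes the column matroid of A if and only if F is infinite or has at least 4 elements. (The universal partial field of this matroid is the 2-cyclotomic partial field 𝕂₂.) -/
/-- A field `F` realizes the column matroid of a matrix `A` over `K` if some matrix `B`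
over `F` with the same column index set has exactly the same linearly independent sets
of columns as `A`. -/
def RealizesColumnMatroid {K : Type*} [Field K] {m k : ℕ}
    (A : Matrix (Fin m) (Fin k) K) (F : Type*) [Field F] : Prop :=
  ∃ (n : ℕ) (B : Matrix (Fin n) (Fin k) F),
    ∀ S : Set (Fin k),
      LinearIndependent F (fun j : S => B.transpose (j : Fin k)) ↔
        LinearIndependent K (fun j : S => A.transpose (j : Fin k))

/-- The matrix `[I₅ | D₅ | P₀]` over `GF(4)`, where `D₅` is the (mod-2) signed incidence
matrix of `K₅` and `P₀` is matrix `V` of the paper. -/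
noncomputable def matI5D5P0 (α : GaloisField 2 2) :
    Matrix (Fin 5) (Fin 18) (GaloisField 2 2) :=
  !![1, 0, 0, 0, 0,  1, 1, 1, 1, 0, 0, 0, 0, 0, 0,  1, α, 0;
     0, 1, 0, 0, 0,  1, 0, 0, 0, 1, 1, 1, 0, 0, 0,  α, α ^ 2, 0;
     0, 0, 1, 0, 0,  0, 1, 0, 0, 1, 0, 0, 1, 1, 0,  α, 0, α ^ 2;
     0, 0, 0, 1, 0,  0, 0, 1, 0, 0, 1, 0, 1, 0, 1,  1, 0, α;
     0, 0, 0, 0, 1,  0, 0, 0, 1, 0, 0, 1, 0, 1, 1,  0, 1, 1]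

namespace K2
abbrev L := List ℤ
def add : L → L → L
  | [], q => q
  | a :: p, [] => a :: p
  | a :: p, b :: q => (a + b) :: add p q
def smul (a : ℤ) : L → L
  | [] => []
  | b :: q => (a * b) :: smul a q
def mul : L → L → L
  | [], _ => []
  | a :: p, q => add (smul a q) (match p with | [] => [] | b :: p' => 0 :: mul (b :: p') q)
def norm : L → L
  | [] => []
  | a :: p => match norm p with
    | [] => if a = 0 then [] else [a]
    | b :: q => a :: b :: q
def sub (p q : L) : L := add p (smul (-1) q)

abbrev V5 := L × L × L × L × L
def det2 (a b c d : L) : L := sub (mul a d) (mul b c)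
def det3 (a b c d e f g h i : L) : L :=
  add (sub (mul a (det2 e f h i)) (mul b (det2 d f g i))) (mul c (det2 d e g h))
def det4 (a1 a2 a3 a4 b1 b2 b3 b4 c1 c2 c3 c4 d1 d2 d3 d4 : L) : L :=
  sub (add (sub (mul a1 (det3 b2 b3 b4 c2 c3 c4 d2 d3 d4))
    (mul a2 (det3 b1 b3 b4 c1 c3 c4 d1 d3 d4)))
    (mul a3 (det3 b1 b2 b4 c1 c2 c4 d1 d2 d4)))
    (mul a4 (det3 b1 b2 b3 c1 c2 c3 d1 d2 d3))
def det5 : V5 → V5 → V5 → V5 → V5 → L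
  | (a1, a2, a3, a4, a5), (b1, b2, b3, b4, b5), (c1, c2, c3, c4, c5), (d1, d2, d3, d4, d5),
    (e1, e2, e3, e4, e5) =>
  add (sub (add (sub (mul a1 (det4 b2 b3 b4 b5 c2 c3 c4 c5 d2 d3 d4 d5 e2 e3 e4 e5))
    (mul a2 (det4 b1 b3 b4 b5 c1 c3 c4 c5 d1 d3 d4 d5 e1 e3 e4 e5)))
    (mul a3 (det4 b1 b2 b4 b5 c1 c2 c4 c5 d1 d2 d4 d5 e1 e2 e4 e5)))
    (mul a4 (det4 b1 b2 b3 b5 c1 c2 c3 c5 d1 d2 d3 d5 e1 e2 e3 e5)))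
    (mul a5 (det4 b1 b2 b3 b4 c1 c2 c3 c4 d1 d2 d3 d4 e1 e2 e3 e4))
def o : L := [1]
def m : L := [-1]
def cols : List V5 :=
  [(o,[],[],[],[]), ([],o,[],[],[]), ([],[],o,[],[]), ([],[],[],o,[]), ([],[],[],[],o),
   (o,m,[],[],[]), (o,[],m,[],[]), (o,[],[],m,[]), (o,[],[],[],m),
   ([],o,m,[],[]), ([],o,[],m,[]), ([],o,[],[],m), ([],[],o,m,[]), ([],[],o,[],m), ([],[],[],o,m),
   (o,[0,1],[0,-1],m,[]), (o,[0,1],[],[],[-1,-1]), ([],[],[0,1],o,[-1,-1])]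
def det5L : List V5 → L
  | [a,b,c,d,e] => det5 a b c d e
  | _ => []
def allSub {α : Type} : Nat → List α → (List α → Bool) → Bool
  | 0, _, f => f []
  | _ + 1, [], _ => true
  | n + 1, a :: l, f => allSub n l (fun s => f (a :: s)) && allSub (n + 1) l f
def units : List L := [[1, 0, -1], [-1, -2, -1], [0, 0, 1], [0, 0, -1], [-1, 0, 1], [-1, 1],
  [1, -1], [1, 2, 1], [0, 1, 1], [0, -1, -1], [0, 1], [0, -1], [1, 1], [-1, -1], [-1], [], [1]]
def good (s : List V5) : Bool := units.contains (norm (det5L s))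
theorem check : allSub 5 cols good = true := by decide +kernel

section ev
variable {K : Type*} [Field K] (x : K)

def ev : L → K
  | [] => 0
  | a :: p => (a : K) + x * ev p

theorem ev_add (p q : L) : ev x (add p q) = ev x p + ev x q := by
  induction p generalizing q with
  | nil => simp [add, ev]
  | cons a p ih =>
    cases q with
    | nil => simp [add, ev]
    | cons b q => simp only [add, ev, ih]; push_cast; ring

theorem ev_smul (a : ℤ) (q : L) : ev x (smul a q) = a * ev x q := by
  induction q with
  | nil => simp [smul, ev]
  | cons b q ih => simp only [smul, ev, ih]; push_cast; ring

theorem ev_mul (p q : L) : ev x (mul p q) = ev x p * ev x q := by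
  induction p with
  | nil => simp [mul, ev]
  | cons a p ih =>
    cases p with
    | nil => simp [mul, ev, ev_add, ev_smul]
    | cons b p =>
      rw [mul, ev_add, ev_smul]
      simp only [ev] at ih ⊢
      rw [ih]; push_cast; ring

theorem ev_sub (p q : L) : ev x (sub p q) = ev x p - ev x q := by
  simp [sub, ev_add, ev_smul, sub_eq_add_neg]

theorem ev_norm (p : L) : ev x (norm p) = ev x p := by
  induction p with
  | nil => rfl
  | cons a p ih =>
    rw [norm]
    simp only [ev]
    rw [← ih]
    split
    · next h =>
      rw [h]
      split
      · next h0 => simp [ev, h0]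
      · simp [ev]
    · next h => rw [h]; simp [ev]

theorem ev_units (h0 : x ≠ 0) (h1 : x ≠ 1) (h2 : x ≠ -1) (p : L) (hp : p ∈ units) :
    ev x p = 0 ↔ p = [] := by
  have a1 : x - 1 ≠ 0 := sub_ne_zero.mpr h1
  have a2 : x + 1 ≠ 0 := fun h => h2 (eq_neg_of_add_eq_zero_left h)
  have key : ∀ (z s : K) (i j k : ℕ), s ≠ 0 → z = s * x ^ i * (x - 1) ^ j * (x + 1) ^ k → z ≠ 0 := by
    intro z s i j k hs hz
    rw [hz]
    exact mul_ne_zero (mul_ne_zero (mul_ne_zero hs (pow_ne_zero _ h0)) (pow_ne_zero _ a1))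
      (pow_ne_zero _ a2)
  have o1 : (1 : K) ≠ 0 := one_ne_zero
  have o2 : (-1 : K) ≠ 0 := neg_ne_zero.mpr one_ne_zero
  constructor
  · intro h
    by_contra hne
    revert h
    simp only [units, List.mem_cons, List.not_mem_nil, or_false] at hp
    rcases hp with rfl | rfl | rfl | rfl | rfl | rfl | rfl | rfl | rfl | rfl | rfl | rfl | rfl |
      rfl | rfl | rfl | rfl
    · exact key _ (-1) 0 1 1 o2 (by simp only [ev]; push_cast; ring)
    · exact key _ (-1) 0 0 2 o2 (by simp only [ev]; push_cast; ring)
    · exact key _ 1 2 0 0 o1 (by simp only [ev]; push_cast; ring)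
    · exact key _ (-1) 2 0 0 o2 (by simp only [ev]; push_cast; ring)
    · exact key _ 1 0 1 1 o1 (by simp only [ev]; push_cast; ring)
    · exact key _ 1 0 1 0 o1 (by simp only [ev]; push_cast; ring)
    · exact key _ (-1) 0 1 0 o2 (by simp only [ev]; push_cast; ring)
    · exact key _ 1 0 0 2 o1 (by simp only [ev]; push_cast; ring)
    · exact key _ 1 1 0 1 o1 (by simp only [ev]; push_cast; ring)
    · exact key _ (-1) 1 0 1 o2 (by simp only [ev]; push_cast; ring)
    · exact key _ 1 1 0 0 o1 (by simp only [ev]; push_cast; ring)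
    · exact key _ (-1) 1 0 0 o2 (by simp only [ev]; push_cast; ring)
    · exact key _ 1 0 0 1 o1 (by simp only [ev]; push_cast; ring)
    · exact key _ (-1) 0 0 1 o2 (by simp only [ev]; push_cast; ring)
    · exact key _ (-1) 0 0 0 o2 (by simp only [ev]; push_cast; ring)
    · exact absurd rfl hne
    · exact key _ 1 0 0 0 o1 (by simp only [ev]; push_cast; ring)
  · rintro rfl; rfl

def vec (v : V5) : Fin 5 → K := ![ev x v.1, ev x v.2.1, ev x v.2.2.1, ev x v.2.2.2.1, ev x v.2.2.2.2]

set_option maxHeartbeats 4000000 in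
theorem det_vec (a b c d e : V5) :
    (Matrix.of ![vec x a, vec x b, vec x c, vec x d, vec x e]).det = ev x (det5 a b c d e) := by
  obtain ⟨a1, a2, a3, a4, a5⟩ := a
  obtain ⟨b1, b2, b3, b4, b5⟩ := b
  obtain ⟨c1, c2, c3, c4, c5⟩ := c
  obtain ⟨d1, d2, d3, d4, d5⟩ := d
  obtain ⟨e1, e2, e3, e4, e5⟩ := e
  simp only [det5, det4, det3, det2, ev_add, ev_sub, ev_mul, vec]
  generalize ev x a1 = a1, ev x a2 = a2, ev x a3 = a3, ev x a4 = a4, ev x a5 = a5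
  generalize ev x b1 = b1, ev x b2 = b2, ev x b3 = b3, ev x b4 = b4, ev x b5 = b5
  generalize ev x c1 = c1, ev x c2 = c2, ev x c3 = c3, ev x c4 = c4, ev x c5 = c5
  generalize ev x d1 = d1, ev x d2 = d2, ev x d3 = d3, ev x d4 = d4, ev x d5 = d5
  generalize ev x e1 = e1, ev x e2 = e2, ev x e3 = e3, ev x e4 = e4, ev x e5 = e5
  simp [Matrix.det_succ_row_zero, Fin.sum_univ_succ, Fin.succAbove]
  ring
end ev

theorem allSub_spec {α : Type} (n : ℕ) (l : List α) (f : List α → Bool)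
    (h : allSub n l f = true) (s : List α) (hs : s.Sublist l) (hn : s.length = n) :
    f s = true := by
  induction l generalizing n f s with
  | nil =>
    obtain rfl := List.sublist_nil.mp hs
    simp at hn; subst hn; exact h
  | cons a l ih =>
    cases n with
    | zero =>
      obtain rfl := List.length_eq_zero_iff.mp hn
      exact h
    | succ n =>
      rw [allSub, Bool.and_eq_true] at h
      cases hs with
      | cons _ hs => exact ih _ _ h.2 _ hs hn
      | cons_cons _ hs => exact ih _ _ h.1 _ hs (by simpa using hn)

def col (j : Fin 18) : V5 := cols.get j

def basisPoly (t : Fin 5 → Fin 18) : L :=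
  norm (det5 (col (t 0)) (col (t 1)) (col (t 2)) (col (t 3)) (col (t 4)))

theorem basisPoly_mem (t : Fin 5 ↪o Fin 18) : basisPoly t ∈ units := by
  have h : [col (t 0), col (t 1), col (t 2), col (t 3), col (t 4)].Sublist cols := by
    rw [List.sublist_iff_exists_fin_orderEmbedding_get_eq]
    refine ⟨t, ?_⟩
    intro i
    change Fin 5 at i
    fin_cases i <;> rfl
  have := allSub_spec 5 cols good check _ h rfl
  simpa [good, det5L, basisPoly] using this

section LI
variable {K : Type*} [Field K] (x : K)

def cvec (j : Fin 18) : Fin 5 → K := vec x (col j)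

theorem li_iff_det (t : Fin 5 → Fin 18) :
    LinearIndependent K (cvec x ∘ t) ↔
      ev x (det5 (col (t 0)) (col (t 1)) (col (t 2)) (col (t 3)) (col (t 4))) ≠ 0 := by
  rw [← det_vec, ← isUnit_iff_ne_zero, ← Matrix.isUnit_iff_isUnit_det,
    ← Matrix.linearIndependent_rows_iff_isUnit]
  have : cvec x ∘ t =
      (Matrix.of ![vec x (col (t 0)), vec x (col (t 1)), vec x (col (t 2)), vec x (col (t 3)),
        vec x (col (t 4))]).row := by
    funext i
    fin_cases i <;> rfl
  rw [this]

theorem li_iff_poly (h0 : x ≠ 0) (h1 : x ≠ 1) (h2 : x ≠ -1) (t : Fin 5 ↪o Fin 18) :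
    LinearIndependent K (cvec x ∘ t) ↔ basisPoly t ≠ [] := by
  rw [li_iff_det, ne_eq, ne_eq, ← ev_norm, ← ev_units x h0 h1 h2 _ (basisPoly_mem t)]
  rfl

theorem span_top : Submodule.span K (cvec x '' Set.univ) = ⊤ := by
  have h : LinearIndependent K (cvec x ∘ ![0, 1, 2, 3, 4]) := by
    rw [li_iff_det]
    rw [← ev_norm]
    have : norm (det5 (col 0) (col 1) (col 2) (col 3) (col 4)) = [1] := by decide +kernel
    simp [this, ev]
  have := h.span_eq_top_of_card_eq_finrank (by simp)
  rw [eq_top_iff, ← this]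
  apply Submodule.span_mono
  rintro _ ⟨i, rfl⟩
  exact ⟨_, trivial, rfl⟩

theorem main (h0 : x ≠ 0) (h1 : x ≠ 1) (h2 : x ≠ -1) (S : Set (Fin 18)) :
    LinearIndepOn K (cvec x) S ↔
      ∃ t : Fin 5 ↪o Fin 18, S ⊆ Set.range t ∧ basisPoly t ≠ [] := by
  constructor
  · intro hS
    set b := hS.extend (Set.subset_univ S) with hb
    have hli : LinearIndepOn K (cvec x) b := hS.linearIndepOn_extend _
    have hsp : Submodule.span K (cvec x '' b) = ⊤ := by
      rw [hb, hS.span_image_extend_eq_span_image, span_top]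
    classical
    have hcard : b.toFinset.card = 5 := by
      have := Module.finrank_eq_card_basis (Module.Basis.mk
        (v := fun j : b => cvec x j) hli (by
        rw [← hsp, Set.image_eq_range]))
      simp at this
      rw [Set.toFinset_card]
      simpa using this.symm
    have hr : Set.range (b.toFinset.orderEmbOfFin hcard) = b := by
      rw [Finset.range_orderEmbOfFin]; simp
    refine ⟨b.toFinset.orderEmbOfFin hcard, ?_, ?_⟩
    · rw [hr]; exact hS.subset_extend _
    · rw [← li_iff_poly x h0 h1 h2, ← linearIndepOn_range_iff (b.toFinset.orderEmbOfFin hcard).injective, hr]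
      exact hli
  · rintro ⟨t, ht, hp⟩
    rw [← li_iff_poly x h0 h1 h2, ← linearIndepOn_range_iff t.injective] at hp
    exact hp.mono ht
end LI

section necessity
variable {K : Type*} [Field K] {F : Type*} [Field F] {V : Type*} [AddCommGroup V] [Module F V]

theorem ind5 (a : K) (h0 : a ≠ 0) (h1 : a ≠ 1) (h2 : a ≠ -1) (b : Fin 18 → V)
    (H : ∀ S, LinearIndepOn F b S ↔ LinearIndepOn K (cvec a) S)
    (t : Fin 5 → Fin 18) (ht : Function.Injective t)
    (hp : basisPoly t ∈ units ∧ basisPoly t ≠ []) : LinearIndependent F (b ∘ t) := by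
  rw [← linearIndepOn_range_iff ht, H, linearIndepOn_range_iff ht, li_iff_det, ← ev_norm, ne_eq]
  rw [show norm _ = basisPoly t from rfl, ev_units a h0 h1 h2 _ hp.1]
  exact hp.2

theorem dep3 (a : K) (b : Fin 18 → V)
    (H : ∀ S, LinearIndepOn F b S ↔ LinearIndepOn K (cvec a) S)
    (i j k : Fin 18) (hk : k ∉ ({i, j} : Set (Fin 18))) (hij : LinearIndepOn F b {i, j})
    (p q : K) (hK : cvec a k = p • cvec a i + q • cvec a j) :
    ∃ p q : F, b k = p • b i + q • b j := by
  have h := H (insert k {i, j})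
  rw [linearIndepOn_insert hk, linearIndepOn_insert hk] at h
  have hn : ¬ (LinearIndepOn K (cvec a) {i, j} ∧
      cvec a k ∉ Submodule.span K (cvec a '' {i, j})) := by
    rintro ⟨-, h⟩
    apply h
    rw [Set.image_pair, Submodule.mem_span_pair]
    exact ⟨p, q, hK.symm⟩
  rw [← h] at hn
  have hm : b k ∈ Submodule.span F (b '' {i, j}) := by
    by_contra hc
    exact hn ⟨hij, hc⟩
  rw [Set.image_pair, Submodule.mem_span_pair] at hm
  obtain ⟨p, q, h⟩ := hm
  exact ⟨p, q, h.symm⟩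

theorem rel5 {b : Fin 18 → V} {i0 i1 i2 i3 i4 : Fin 18}
    (h : LinearIndependent F (b ∘ ![i0, i1, i2, i3, i4])) (c0 c1 c2 c3 c4 : F)
    (hc : c0 • b i0 + c1 • b i1 + c2 • b i2 + c3 • b i3 + c4 • b i4 = 0) :
    c0 = 0 ∧ c1 = 0 ∧ c2 = 0 ∧ c3 = 0 ∧ c4 = 0 := by
  have := Fintype.linearIndependent_iff.mp h ![c0, c1, c2, c3, c4]
    (by simpa [Fin.sum_univ_five] using hc)
  exact ⟨this 0, this 1, this 2, this 3, this 4⟩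

theorem cvec_dep (a : K) :
    cvec a 5 = (1 : K) • cvec a 0 + (-1 : K) • cvec a 1 ∧
    cvec a 9 = (1 : K) • cvec a 1 + (-1 : K) • cvec a 2 ∧
    cvec a 6 = (1 : K) • cvec a 0 + (-1 : K) • cvec a 2 ∧
    cvec a 7 = (1 : K) • cvec a 0 + (-1 : K) • cvec a 3 ∧
    cvec a 6 = (1 : K) • cvec a 5 + (1 : K) • cvec a 9 ∧
    cvec a 15 = (1 : K) • cvec a 7 + a • cvec a 9 := by
  refine ⟨?_, ?_, ?_, ?_, ?_, ?_⟩ <;>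
  · funext i
    fin_cases i <;> simp [cvec, vec, col, cols, o, m, ev]

theorem exists_elt (a : K) (h0 : a ≠ 0) (h1 : a ≠ 1) (h2 : a ≠ -1) (b : Fin 18 → V)
    (H : ∀ S, LinearIndepOn F b S ↔ LinearIndepOn K (cvec a) S) :
    ∃ y : F, y ≠ 0 ∧ y ≠ 1 ∧ y ≠ -1 := by
  have I := ind5 a h0 h1 h2 b H
  have E := I ![0, 1, 2, 3, 4] (by decide) (by decide +kernel)
  have I5 := I ![5, 1, 2, 3, 4] (by decide) (by decide +kernel)
  have I5' := I ![5, 0, 2, 3, 4] (by decide) (by decide +kernel)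
  have I9 := I ![9, 2, 0, 3, 4] (by decide) (by decide +kernel)
  have I9' := I ![9, 1, 0, 3, 4] (by decide) (by decide +kernel)
  have I6 := I ![6, 2, 1, 3, 4] (by decide) (by decide +kernel)
  have I6' := I ![6, 0, 1, 3, 4] (by decide) (by decide +kernel)
  have I7 := I ![7, 3, 1, 2, 4] (by decide) (by decide +kernel)
  have I59 := I ![5, 9, 0, 3, 4] (by decide) (by decide +kernel)
  have I79 := I ![7, 9, 0, 1, 4] (by decide) (by decide +kernel)
  have J9 := I ![15, 9, 0, 1, 4] (by decide) (by decide +kernel)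
  have J7 := I ![15, 7, 0, 1, 4] (by decide) (by decide +kernel)
  have J1 := I ![15, 6, 1, 3, 4] (by decide) (by decide +kernel)
  have J2 := I ![15, 5, 2, 3, 4] (by decide) (by decide +kernel)
  have pair : ∀ (t : Fin 5 → Fin 18) (_ : Function.Injective t) (_ : LinearIndependent F (b ∘ t))
      (i j : Fin 5), LinearIndepOn F b {t i, t j} := by
    intro t ht h i j
    refine ((linearIndepOn_range_iff ht b).mpr h).mono ?_
    rintro _ (rfl | rfl) <;> exact ⟨_, rfl⟩
  obtain ⟨d5, d9, d6, d7, d569, d15⟩ := cvec_dep a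
  obtain ⟨p, q, e5⟩ := dep3 a b H 0 1 5 (by decide) (pair _ (by decide) E 0 1) _ _ d5
  obtain ⟨r, s, e9⟩ := dep3 a b H 1 2 9 (by decide) (pair _ (by decide) E 1 2) _ _ d9
  obtain ⟨u, w, e6⟩ := dep3 a b H 0 2 6 (by decide) (pair _ (by decide) E 0 2) _ _ d6
  obtain ⟨y, z, e7⟩ := dep3 a b H 0 3 7 (by decide) (pair _ (by decide) E 0 3) _ _ d7
  obtain ⟨l, k, e6'⟩ := dep3 a b H 5 9 6 (by decide) (pair _ (by decide) I59 0 1) _ _ d569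
  obtain ⟨g, n, e15⟩ := dep3 a b H 7 9 15 (by decide) (pair _ (by decide) I79 0 1) _ _ d15
  have p0 : p ≠ 0 := by
    rintro rfl
    have := rel5 I5 1 (-q) 0 0 0 (by rw [e5]; module)
    simp at this
  have q0 : q ≠ 0 := by
    rintro rfl
    have := rel5 I5' 1 (-p) 0 0 0 (by rw [e5]; module)
    simp at this
  have r0 : r ≠ 0 := by
    rintro rfl
    have := rel5 I9 1 (-s) 0 0 0 (by rw [e9]; module)
    simp at this
  have s0 : s ≠ 0 := by
    rintro rfl
    have := rel5 I9' 1 (-r) 0 0 0 (by rw [e9]; module)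
    simp at this
  have u0 : u ≠ 0 := by
    rintro rfl
    have := rel5 I6 1 (-w) 0 0 0 (by rw [e6]; module)
    simp at this
  have w0 : w ≠ 0 := by
    rintro rfl
    have := rel5 I6' 1 (-u) 0 0 0 (by rw [e6]; module)
    simp at this
  have y0 : y ≠ 0 := by
    rintro rfl
    have := rel5 I7 1 (-z) 0 0 0 (by rw [e7]; module)
    simp at this
  have g0 : g ≠ 0 := by
    rintro rfl
    have := rel5 J9 1 (-n) 0 0 0 (by rw [e15]; module)
    simp at this
  have n0 : n ≠ 0 := by
    rintro rfl
    have := rel5 J7 1 (-g) 0 0 0 (by rw [e15]; module)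
    simp at this
  have tri : u * q * s = -(p * w * r) := by
    have h : u • b 0 + w • b 2 = l • (p • b 0 + q • b 1) + k • (r • b 1 + s • b 2) := by
      rw [← e6, ← e5, ← e9, ← e6']
    obtain ⟨A, B, C, -, -⟩ := rel5 E (u - l * p) (-(l * q + k * r)) (w - k * s) 0 0 (by
      rw [← sub_eq_zero] at h
      rw [← h]; module)
    linear_combination q * s * A + p * r * C - p * s * B
  have n1 : g * y * w ≠ n * s * u := by
    intro h
    have := rel5 J1 u (-(g * y)) (-(n * r * u)) (-(g * z * u)) 0 (by
      rw [e15, e6, e9, e7]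
      have : u • (g • (y • b 0 + z • b 3) + n • (r • b 1 + s • b 2)) +
        -(g * y) • (u • b 0 + w • b 2) + -(n * r * u) • b 1 + -(g * z * u) • b 3 + (0 : F) • b 4
        = (n * s * u - g * y * w) • b 2 := by module
      rw [this, h, sub_self, zero_smul])
    exact u0 this.1
  have n2 : g * y * q ≠ n * r * p := by
    intro h
    have := rel5 J2 p (-(g * y)) (-(n * s * p)) (-(g * z * p)) 0 (by
      rw [e15, e5, e9, e7]
      have : p • (g • (y • b 0 + z • b 3) + n • (r • b 1 + s • b 2)) +
        -(g * y) • (p • b 0 + q • b 1) + -(n * s * p) • b 2 + -(g * z * p) • b 3 + (0 : F) • b 4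
        = (n * r * p - g * y * q) • b 1 := by module
      rw [this, h, sub_self, zero_smul])
    exact p0 this.1
  have D0 : n * s * u ≠ 0 := by simp [n0, s0, u0]
  refine ⟨g * y * w / (n * s * u), ?_, ?_, ?_⟩
  · exact div_ne_zero (by simp [g0, y0, w0]) D0
  · rw [ne_eq, div_eq_one_iff_eq D0]; exact n1
  · rw [ne_eq, div_eq_iff D0]
    intro h
    apply n2
    apply mul_left_cancel₀ w0
    linear_combination q * h - n * tri
end necessity

theorem card_iff (F : Type*) [Field F] :
    (∃ y : F, y ≠ 0 ∧ y ≠ 1 ∧ y ≠ -1) ↔ (Infinite F ∨ 4 ≤ Nat.card F) := by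
  classical
  constructor
  · rintro ⟨y, h0, h1, h2⟩
    rcases finite_or_infinite F with hf | hf
    · right
      have := Fintype.ofFinite F
      rw [Nat.card_eq_fintype_card]
      by_cases hc : (1 : F) = -1
      · have : ({0, 1, y, y + 1} : Finset F).card = 4 := by
          have a1 : y + 1 ≠ 0 := fun h => h2 (eq_neg_of_add_eq_zero_left h)
          rw [Finset.card_insert_of_notMem, Finset.card_insert_of_notMem, Finset.card_pair]
          · simp
          · simp [h1.symm, h0]
          · simp [h0.symm, a1.symm]
        rw [← this]; exact Finset.card_le_univ _
      · have : ({0, 1, -1, y} : Finset F).card = 4 := by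
          rw [Finset.card_insert_of_notMem, Finset.card_insert_of_notMem, Finset.card_pair]
          · exact h2.symm
          · simp [hc, h1.symm]
          · simp [h0.symm]
        rw [← this]; exact Finset.card_le_univ _
    · exact Or.inl hf
  · intro h
    have : ∃ y : F, y ∉ ({0, 1, -1} : Finset F) := by
      rcases h with h | h
      · exact Infinite.exists_notMem_finset _
      · have : Finite F := Nat.finite_of_card_ne_zero (by omega)
        have := Fintype.ofFinite F
        rw [Nat.card_eq_fintype_card] at h
        by_contra! hc
        have h2 : (Finset.univ : Finset F) ⊆ {0, 1, -1} := fun y _ => hc y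
        have h3 := Finset.card_le_card h2
        have h4 := Finset.card_le_three (a := (0 : F)) (b := 1) (c := -1)
        rw [Finset.card_univ] at h3
        omega
    obtain ⟨y, hy⟩ := this
    simp only [Finset.mem_insert, Finset.mem_singleton, not_or] at hy
    exact ⟨y, hy⟩

end K2

namespace K2
theorem A_eq (α : GaloisField 2 2) (hα : α ^ 2 = α + 1) (j : Fin 18) :
    (matI5D5P0 α).transpose j =
      (if j = 16 ∨ j = 17 then α else 1 : GaloisField 2 2) • cvec α j := by
  have h2 : (2 : GaloisField 2 2) = 0 := CharTwo.two_eq_zero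
  have hn : ∀ z : GaloisField 2 2, -z = z := fun z => CharTwo.neg_eq z
  have h3 : α * (α + 1) = 1 := by linear_combination hα + α * h2
  funext i
  fin_cases j <;> fin_cases i <;>
    simp [matI5D5P0, cvec, vec, col, cols, o, m, ev, hn] <;>
    first | ring1 | linear_combination -h3

theorem A_li (α : GaloisField 2 2) (hα : α ^ 2 = α + 1) (h0 : α ≠ 0) (S : Set (Fin 18)) :
    LinearIndependent (GaloisField 2 2) (fun j : S => (matI5D5P0 α).transpose (j : Fin 18)) ↔
      LinearIndepOn (GaloisField 2 2) (cvec α) S := by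
  let w : S → (GaloisField 2 2)ˣ := fun j =>
    if (j : Fin 18) = 16 ∨ (j : Fin 18) = 17 then Units.mk0 α h0 else 1
  have : (fun j : S => (matI5D5P0 α).transpose (j : Fin 18)) =
      w • (fun j : S => cvec α (j : Fin 18)) := by
    funext j
    rw [A_eq α hα]
    simp only [w, Pi.smul_apply']
    split <;> simp [Units.smul_def]
  unfold LinearIndepOn
  constructor
  · intro h
    rw [this] at h
    have := h.units_smul w⁻¹
    simpa using this
  · intro h
    rw [this]
    exact h.units_smul w
end K2

/-- A field `F` realizes the column matroid of `[I₅ | D₅ | P₀]` iff `F` is infinite or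
has at least 4 elements (the universal partial field of this matroid is the
2-cyclotomic partial field `𝕂₂`). -/
theorem stmt_15 (α : GaloisField 2 2) (hα : α ^ 2 = α + 1) (F : Type*) [Field F] :
    RealizesColumnMatroid (matI5D5P0 α) F ↔ (Infinite F ∨ 4 ≤ Nat.card F) := by
  have h2 : (2 : GaloisField 2 2) = 0 := CharTwo.two_eq_zero
  have h0 : α ≠ 0 := by
    rintro rfl
    simp at hα
  have h1 : α ≠ 1 := by
    rintro rfl
    simp at hα
  have h1' : α ≠ -1 := by rwa [CharTwo.neg_eq]
  rw [← K2.card_iff]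
  constructor
  · rintro ⟨n, B, H⟩
    refine K2.exists_elt α h0 h1 h1' (fun j => B.transpose j) ?_
    intro S
    rw [← K2.A_li α hα h0]
    exact H S
  · rintro ⟨y, hy0, hy1, hy2⟩
    refine ⟨5, Matrix.of fun r j => K2.cvec y j r, ?_⟩
    intro S
    rw [K2.A_li α hα h0, K2.main α h0 h1 h1', ← K2.main y hy0 hy1 hy2]
    rfl
end

section
/- Let P₀ be the 4 × 4 matrix over GF(4) with rows (1,α,1,0), (α,α²,α²,α²), (α,1,α²,α), (1,0,1,1), and let A = [I₄ | D₄ | P₀] be the 4 × 14 matrix over GF(4) obtained by placing the 4 × 4 identity matrix, the matrix D₄, and P₀ side by side. A field F realizes the column matroid of A if and only if F is infinite, has exactly 4 elements, or has at least 7 elements. (The universal partial field of this matroid is the Pappus-template partial field 𝔓𝕋; in particular the matroid is representable over GF(4) and over all fields of size at least 7, but over no other field.) -/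
/-- The matrix `[I₄ | D₄ | P₀]` over `GF(4)`, where `D₄` is the (mod-2) signed incidence
matrix of `K₄` and `P₀` is matrix `XVI` of the paper. -/
noncomputable def matI4D4P0 (α : GaloisField 2 2) :
    Matrix (Fin 4) (Fin 14) (GaloisField 2 2) :=
  !![1, 0, 0, 0,  1, 1, 1, 0, 0, 0,  1, α, 1, 0;
     0, 1, 0, 0,  1, 0, 0, 1, 1, 0,  α, α ^ 2, α ^ 2, α ^ 2;
     0, 0, 1, 0,  0, 1, 0, 1, 0, 1,  α, 1, α ^ 2, α;
     0, 0, 0, 1,  0, 0, 1, 0, 1, 1,  1, 0, 1, 1]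


/-! Integer polynomials as coefficient lists. -/

def pEval {R : Type*} [CommRing R] (x : R) : List ℤ → R
  | [] => 0
  | a :: l => (a : R) + x * pEval x l

def pAdd : List ℤ → List ℤ → List ℤ
  | [], m => m
  | a :: l, [] => a :: l
  | a :: l, b :: m => (a + b) :: pAdd l m

def pScale (c : ℤ) : List ℤ → List ℤ
  | [] => []
  | a :: l => (c * a) :: pScale c l

def pMul : List ℤ → List ℤ → List ℤ
  | [], _ => []
  | a :: l, m => pAdd (pScale a m) (0 :: pMul l m)

def pSub (l m : List ℤ) : List ℤ := pAdd l (pScale (-1) m)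

def pZero : List ℤ → Bool
  | [] => true
  | a :: l => decide (a = 0) && pZero l

section
variable {R : Type*} [CommRing R] (x : R)

theorem pEval_add (l m : List ℤ) : pEval x (pAdd l m) = pEval x l + pEval x m := by
  induction l generalizing m with
  | nil => simp [pAdd, pEval]
  | cons a l ih =>
    cases m with
    | nil => simp [pAdd, pEval]
    | cons b m => simp only [pAdd, pEval, ih]; push_cast; ring

theorem pEval_scale (c : ℤ) (l : List ℤ) : pEval x (pScale c l) = c * pEval x l := by
  induction l with
  | nil => simp [pScale, pEval]
  | cons a l ih => simp only [pScale, pEval, ih]; push_cast; ring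

theorem pEval_mul (l m : List ℤ) : pEval x (pMul l m) = pEval x l * pEval x m := by
  induction l with
  | nil => simp [pMul, pEval]
  | cons a l ih =>
    simp only [pMul, pEval, pEval_add, pEval_scale, ih]; push_cast; ring

theorem pEval_sub (l m : List ℤ) : pEval x (pSub l m) = pEval x l - pEval x m := by
  simp only [pSub, pEval_add, pEval_scale]; push_cast; ring

theorem pEval_zero (l : List ℤ) (h : pZero l = true) : pEval x l = 0 := by
  induction l with
  | nil => rfl
  | cons a l ih =>
    simp only [pZero, Bool.and_eq_true, decide_eq_true_eq] at h
    simp [pEval, ih h.2, h.1]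
end

def pDet2 (a b c d : List ℤ) : List ℤ := pSub (pMul a d) (pMul b c)

def pDet3 (a b c : Fin 3 → List ℤ) : List ℤ :=
  pAdd (pSub (pMul (a 0) (pDet2 (b 1) (b 2) (c 1) (c 2)))
    (pMul (a 1) (pDet2 (b 0) (b 2) (c 0) (c 2))))
    (pMul (a 2) (pDet2 (b 0) (b 1) (c 0) (c 1)))

def pDet4 (a b c d : Fin 4 → List ℤ) : List ℤ :=
  pSub (pAdd (pSub
    (pMul (a 0) (pDet3 ![b 1, b 2, b 3] ![c 1, c 2, c 3] ![d 1, d 2, d 3]))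
    (pMul (a 1) (pDet3 ![b 0, b 2, b 3] ![c 0, c 2, c 3] ![d 0, d 2, d 3])))
    (pMul (a 2) (pDet3 ![b 0, b 1, b 3] ![c 0, c 1, c 3] ![d 0, d 1, d 3])))
    (pMul (a 3) (pDet3 ![b 0, b 1, b 2] ![c 0, c 1, c 2] ![d 0, d 1, d 2]))

/-- Columns of the generic representation. -/
def pCol : Fin 14 → Fin 4 → List ℤ :=
  ![![[1], [], [], []], ![[], [1], [], []], ![[], [], [1], []], ![[], [], [], [1]],
    ![[1], [-1], [], []], ![[1], [], [-1], []], ![[1], [], [], [-1]],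
    ![[], [1], [-1], []], ![[], [1], [], [-1]], ![[], [], [1], [-1]],
    ![[1], [0, 1], [0, -1], [-1]], ![[0, 1], [0, 0, 1], [0, -1, -1], []],
    ![[1], [1, 1], [-1, -1], [-1]], ![[], [1, 1], [0, -1], [-1]]]

def pD (a b c d : Fin 14) : List ℤ := pDet4 (pCol a) (pCol b) (pCol c) (pCol d)

def pUnits : List (List ℤ) :=
  [[1], [0, 1], [1, 1], [0, 1, 1], [0, 0, 1], [2, 1], [-1, 1], [0, 1, 2]]

def pCheck (p : List ℤ) : Bool :=
  pZero p || pUnits.any (fun u => pZero (pSub p u) || pZero (pAdd p u))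

set_option maxRecDepth 100000 in
theorem pTable : ∀ a b : Fin 14, a < b → ∀ c, b < c → ∀ d, c < d →
    pCheck (pD a b c d) = true := by
  decide +kernel

def pMat {R : Type*} [CommRing R] (x : R) : Matrix (Fin 4) (Fin 14) R :=
  Matrix.of fun i j => pEval x (pCol j i)

theorem det4_formula {R : Type*} [CommRing R] (M : Matrix (Fin 4) (Fin 4) R) :
    M.det =
      M 0 0 * (M 1 1 * (M 2 2 * M 3 3 - M 2 3 * M 3 2) - M 1 2 * (M 2 1 * M 3 3 - M 2 3 * M 3 1)
        + M 1 3 * (M 2 1 * M 3 2 - M 2 2 * M 3 1))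
      - M 0 1 * (M 1 0 * (M 2 2 * M 3 3 - M 2 3 * M 3 2) - M 1 2 * (M 2 0 * M 3 3 - M 2 3 * M 3 0)
        + M 1 3 * (M 2 0 * M 3 2 - M 2 2 * M 3 0))
      + M 0 2 * (M 1 0 * (M 2 1 * M 3 3 - M 2 3 * M 3 1) - M 1 1 * (M 2 0 * M 3 3 - M 2 3 * M 3 0)
        + M 1 3 * (M 2 0 * M 3 1 - M 2 1 * M 3 0))
      - M 0 3 * (M 1 0 * (M 2 1 * M 3 2 - M 2 2 * M 3 1) - M 1 1 * (M 2 0 * M 3 2 - M 2 2 * M 3 0)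
        + M 1 2 * (M 2 0 * M 3 1 - M 2 1 * M 3 0)) := by
  rw [Matrix.det_succ_row_zero]
  simp [Fin.sum_univ_succ, Matrix.det_fin_three, Fin.succAbove]
  ring

theorem pMat_det {R : Type*} [CommRing R] (x : R) (f : Fin 4 → Fin 14) :
    (Matrix.of fun i => (pMat x).transpose (f i)).det
      = pEval x (pD (f 0) (f 1) (f 2) (f 3)) := by
  rw [det4_formula]
  simp [pD, pDet4, pDet3, pDet2, pEval_add, pEval_sub, pEval_mul, pMat]

/-- `x` avoids the five forbidden values. -/
def Good {F : Type*} [Field F] (x : F) : Prop :=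
  x ≠ 0 ∧ x + 1 ≠ 0 ∧ x - 1 ≠ 0 ∧ x + 2 ≠ 0 ∧ 2 * x + 1 ≠ 0

theorem pUnits_ne {F : Type*} [Field F] {x : F} (h : Good x) (u : List ℤ) (hu : u ∈ pUnits) :
    pEval x u ≠ 0 := by
  obtain ⟨h1, h2, h3, h4, h5⟩ := h
  have e2 : 1 + x ≠ 0 := by rwa [add_comm]
  have e3 : -1 + x ≠ 0 := by rwa [add_comm, ← sub_eq_add_neg]
  have e4 : 2 + x ≠ 0 := by rwa [add_comm]
  have e5 : 1 + x * 2 ≠ 0 := by rwa [add_comm, mul_comm]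
  simp only [pUnits, List.mem_cons, List.not_mem_nil, or_false] at hu
  rcases hu with rfl | rfl | rfl | rfl | rfl | rfl | rfl | rfl <;> simp [pEval, *]

theorem pMat_det_zero {F : Type*} [Field F] {x : F} (h : Good x) (f : Fin 4 → Fin 14)
    (hf : StrictMono f) :
    (Matrix.of fun i => (pMat x).transpose (f i)).det = 0 ↔
      pZero (pD (f 0) (f 1) (f 2) (f 3)) = true := by
  rw [pMat_det]
  refine ⟨fun h0 => ?_, pEval_zero x _⟩
  have ht := pTable (f 0) (f 1) (hf (by decide)) (f 2) (hf (by decide)) (f 3) (hf (by decide))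
  by_contra hz
  rw [pCheck, Bool.or_eq_true, List.any_eq_true] at ht
  rcases ht with ht | ⟨u, hu, ht⟩
  · exact hz ht
  · rw [Bool.or_eq_true] at ht
    apply pUnits_ne h u hu
    rcases ht with ht | ht
    · have := pEval_zero x _ ht
      rw [pEval_sub, h0] at this
      simpa using this
    · have := pEval_zero x _ ht
      rw [pEval_add, h0] at this
      simpa using this

theorem charTwo_GF4 : CharP (GaloisField 2 2) 2 := inferInstance

theorem good_alpha (α : GaloisField 2 2) (hα : α ^ 2 = α + 1) : Good α := by
  have h2 : (2 : GaloisField 2 2) = 0 := CharTwo.two_eq_zero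
  have h0 : α ≠ 0 := by rintro rfl; simp at hα
  have h1 : α + 1 ≠ 0 := by rw [← hα]; exact pow_ne_zero 2 h0
  refine ⟨h0, h1, ?_, ?_, ?_⟩
  · rwa [CharTwo.sub_eq_add]
  · rwa [h2, add_zero]
  · simp [h2]

theorem mat_eq (α : GaloisField 2 2) (hα : α ^ 2 = α + 1) : matI4D4P0 α = pMat α := by
  have h2 : (2 : GaloisField 2 2) = 0 := CharTwo.two_eq_zero
  have hn : ∀ y : GaloisField 2 2, -y = y := CharTwo.neg_eq
  ext i j
  fin_cases i <;> fin_cases j <;>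
    simp [matI4D4P0, pMat, pCol, pEval, hn] <;> grind

theorem li_iff_det {F : Type*} [Field F] (v : Fin 4 → Fin 4 → F) :
    LinearIndependent F v ↔ (Matrix.of v).det ≠ 0 := by
  have := Matrix.linearIndependent_rows_iff_isUnit (A := Matrix.of v)
  rw [Matrix.isUnit_iff_isUnit_det, isUnit_iff_ne_zero] at this
  exact this

theorem transfer {K F : Type*} [Field K] [Field F] (a : Fin 14 → Fin 4 → K)
    (b : Fin 14 → Fin 4 → F) (hA : Submodule.span K (Set.range a) = ⊤)
    (h : ∀ f : Fin 4 → Fin 14, StrictMono f →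
      (Matrix.of fun i => a (f i)).det ≠ 0 → (Matrix.of fun i => b (f i)).det ≠ 0)
    (S : Set (Fin 14)) (hS : LinearIndepOn K a S) :
    LinearIndepOn F b S := by
  classical
  obtain ⟨T, -, hST, hspan, hT⟩ := exists_linearIndepOn_extension hS (Set.subset_univ S)
  have hc : T.toFinset.card = 4 := by
    have h1 : Submodule.span K (a '' T) = ⊤ := by
      rw [eq_top_iff, ← hA, Submodule.span_le, ← Set.image_univ]
      exact hspan
    have h2 := linearIndependent_iff_card_eq_finrank_span.1 hT.linearIndependent
    have h3 : Set.range (fun x : T => a x) = a '' T := by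
      ext y; simp
    rw [h3, Set.finrank, h1, finrank_top] at h2
    simp only [Module.finrank_fintype_fun_eq_card, Fintype.card_fin] at h2
    rw [Set.toFinset_card, h2]
  set f := T.toFinset.orderEmbOfFin hc with hf
  have hr : Set.range f = T := by
    rw [hf, Finset.range_orderEmbOfFin]; simp
  have h1 := (linearIndepOn_range_iff f.injective a).1 (hr ▸ hT)
  have h2 := h f f.strictMono ((li_iff_det _).1 h1)
  have h3 := (linearIndepOn_range_iff f.injective b).2 ((li_iff_det _).2 h2)
  rw [hr] at h3
  exact h3.mono hST

theorem pMat_span {F : Type*} [Field F] (x : F) :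
    Submodule.span F (Set.range (pMat x).transpose) = ⊤ := by
  have h : LinearIndependent F (fun i : Fin 4 => (pMat x).transpose (![0, 1, 2, 3] i)) := by
    rw [li_iff_det, pMat_det]
    have : pD 0 1 2 3 = [1] := by decide +kernel
    simp [this, pEval]
  have h2 := h.span_eq_top_of_card_eq_finrank' (by simp)
  rw [eq_top_iff, ← h2]
  apply Submodule.span_mono
  rintro _ ⟨i, rfl⟩
  exact ⟨_, rfl⟩

theorem realizes_of_good (α : GaloisField 2 2) (hα : α ^ 2 = α + 1) {F : Type*} [Field F]
    (x : F) (hx : Good x) : RealizesColumnMatroid (matI4D4P0 α) F := by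
  refine ⟨4, pMat x, fun S => ?_⟩
  rw [mat_eq α hα]
  have hg := good_alpha α hα
  constructor
  · refine transfer _ _ (pMat_span x) (fun f hf h => ?_) S
    rw [Ne, pMat_det_zero hx f hf] at h
    rwa [Ne, pMat_det_zero hg f hf]
  · refine transfer _ _ (pMat_span α) (fun f hf h => ?_) S
    rw [Ne, pMat_det_zero hg f hf] at h
    rwa [Ne, pMat_det_zero hx f hf]

theorem exists_coords {K F : Type*} [Field K] [Field F] {n : ℕ} (a : Fin 14 → Fin 4 → K)
    (b : Fin 14 → Fin n → F)
    (hB : ∀ S, LinearIndepOn F b S ↔ LinearIndepOn K a S)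
    (f₀ : Fin 4 → Fin 14) (hf₀ : StrictMono f₀)
    (hdet : (Matrix.of fun i => a (f₀ i)).det ≠ 0) :
    ∃ C : Fin 14 → Fin 4 → F, (∀ i, C (f₀ i) = Pi.single i 1) ∧
      ∀ f : Fin 4 → Fin 14, StrictMono f →
        ((Matrix.of fun i => C (f i)).det ≠ 0 ↔ (Matrix.of fun i => a (f i)).det ≠ 0) := by
  have hf : ∀ f : Fin 4 → Fin 14, StrictMono f → (LinearIndependent F (b ∘ f) ↔
      (Matrix.of fun i => a (f i)).det ≠ 0) := by
    intro f hf
    rw [← linearIndepOn_range_iff hf.injective, hB, linearIndepOn_range_iff hf.injective]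
    exact li_iff_det _
  have hli := (hf f₀ hf₀).2 hdet
  have hinj := hli.fintypeLinearCombination_injective
  have hmem : ∀ j, ∃ c : Fin 4 → F, Fintype.linearCombination F (b ∘ f₀) c = b j := by
    intro j
    have : b j ∈ Submodule.span F (Set.range (b ∘ f₀)) := by
      by_cases hj : j ∈ Set.range f₀
      · obtain ⟨i, rfl⟩ := hj
        exact Submodule.subset_span ⟨i, rfl⟩
      · by_contra hn
        have h1 := (linearIndepOn_insert hj).2
          ⟨(linearIndepOn_range_iff hf₀.injective b).2 hli,
            by rwa [← Set.range_comp]⟩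
        rw [hB, linearIndepOn_insert hj] at h1
        apply h1.2
        have h2 := (linearIndepOn_range_iff hf₀.injective a).1 h1.1
        rw [← Set.range_comp, h2.span_eq_top_of_card_eq_finrank' (by simp)]
        trivial
    rw [← Fintype.range_linearCombination] at this
    exact this
  choose C hC using hmem
  refine ⟨C, fun i => hinj ?_, fun f hsm => ?_⟩
  · rw [hC]; simp [Fintype.linearCombination_apply_single]
  · rw [← hf f hsm, ← li_iff_det,
      ← LinearMap.linearIndependent_iff _ (LinearMap.ker_eq_bot.2 hinj)]
    have : (Fintype.linearCombination F (b ∘ f₀)) ∘ (fun i => C (f i)) = b ∘ f := by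
      funext i; exact hC _
    rw [this]

theorem strictMono_four {i j k : Fin 14} (h0 : 0 < i) (h1 : i < j) (h2 : j < k) :
    StrictMono (![0, i, j, k] : Fin 4 → Fin 14) := by
  rw [Fin.strictMono_iff_lt_succ]
  intro t
  fin_cases t
  · exact h0
  · exact h1
  · exact h2

/-- The determinant of three vectors in a three-dimensional space. -/
def T3 {F : Type*} [Field F] (N : Fin 14 → Fin 3 → F) (i j k : Fin 14) : F :=
  N i 0 * (N j 1 * N k 2 - N j 2 * N k 1) - N i 1 * (N j 0 * N k 2 - N j 2 * N k 0)
    + N i 2 * (N j 0 * N k 1 - N j 1 * N k 0)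

theorem exists_plane (α : GaloisField 2 2) (hα : α ^ 2 = α + 1) {F : Type*} [Field F]
    (h : RealizesColumnMatroid (matI4D4P0 α) F) :
    ∃ C : Fin 14 → Fin 3 → F, C 4 = ![1, 0, 0] ∧ C 5 = ![0, 1, 0] ∧ C 6 = ![0, 0, 1] ∧
      ∀ i j k : Fin 14, 0 < i → i < j → j < k →
        (T3 C i j k = 0 ↔ pZero (pD 0 i j k) = true) := by
  obtain ⟨n, B, hB⟩ := h
  rw [mat_eq α hα] at hB
  have hg := good_alpha α hα
  have hsm : StrictMono (![0, 4, 5, 6] : Fin 4 → Fin 14) :=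
    strictMono_four (by decide) (by decide) (by decide)
  obtain ⟨C, hC, hdet⟩ := exists_coords (pMat α).transpose B.transpose hB ![0, 4, 5, 6] hsm
    (by
      rw [Ne, pMat_det_zero hg _ hsm]
      decide +kernel)
  have c0 : C 0 = Pi.single 0 1 := hC 0
  have c4 : C 4 = Pi.single 1 1 := hC 1
  have c5 : C 5 = Pi.single 2 1 := hC 2
  have c6 : C 6 = Pi.single 3 1 := hC 3
  refine ⟨fun j k => C j k.succ, ?_, ?_, ?_, ?_⟩
  · funext k; fin_cases k <;> simp [c4]
  · funext k; fin_cases k <;> simp [c5]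
  · funext k; fin_cases k <;> simp [c6]
  · intro i j k h0 h1 h2
    have h3 := strictMono_four h0 h1 h2
    have h4 := not_iff_not.1 (hdet _ h3)
    rw [pMat_det_zero hg _ h3, det4_formula] at h4
    have h5 : T3 (fun j k => C j k.succ) i j k = 0 ↔ pZero (pD 0 i j k) = true := by
      refine Iff.trans (Eq.congr_left ?_) h4
      simp [T3, c0]
      try rfl
    exact h5

theorem exists_normal (α : GaloisField 2 2) (hα : α ^ 2 = α + 1) {F : Type*} [Field F]
    (h : RealizesColumnMatroid (matI4D4P0 α) F) :
    ∃ N : Fin 14 → Fin 3 → F, (∃ p q s : F, N 4 = ![p, 0, 0] ∧ N 5 = ![0, q, 0] ∧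
      N 6 = ![0, 0, s]) ∧ N 7 = ![1, -1, 0] ∧ (∃ r, N 8 = ![r, 0, -r]) ∧
      ∀ i j k : Fin 14, 0 < i → i < j → j < k →
        (T3 N i j k = 0 ↔ pZero (pD 0 i j k) = true) := by
  obtain ⟨C, c4, c5, c6, hC⟩ := exists_plane α hα h
  have e1 : T3 C 4 5 7 = 0 := (hC 4 5 7 (by decide) (by decide) (by decide)).2 (by decide +kernel)
  have e2 : T3 C 4 6 7 ≠ 0 := mt (hC 4 6 7 (by decide) (by decide) (by decide)).1 (by decide +kernel)
  have e3 : T3 C 5 6 7 ≠ 0 := mt (hC 5 6 7 (by decide) (by decide) (by decide)).1 (by decide +kernel)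
  have e4 : T3 C 4 6 8 = 0 := (hC 4 6 8 (by decide) (by decide) (by decide)).2 (by decide +kernel)
  have e5 : T3 C 4 5 8 ≠ 0 := mt (hC 4 5 8 (by decide) (by decide) (by decide)).1 (by decide +kernel)
  have e6 : T3 C 5 6 8 ≠ 0 := mt (hC 5 6 8 (by decide) (by decide) (by decide)).1 (by decide +kernel)
  simp [T3, c4, c5, c6] at e1 e2 e3 e4 e5 e6
  set s1 := C 7 0 with hs1
  set s2 := -C 7 1 with hs2
  set s3 := -(C 8 2 * C 7 0 / C 8 0) with hs3
  have n1 : s1 ≠ 0 := e3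
  have n2 : s2 ≠ 0 := neg_ne_zero.2 e2
  have n3 : s3 ≠ 0 := neg_ne_zero.2 (div_ne_zero (mul_ne_zero e5 e3) e6)
  refine ⟨fun j => ![C j 0 / s1, C j 1 / s2, C j 2 / s3], ⟨1 / s1, 1 / s2, 1 / s3, ?_, ?_, ?_⟩,
    ?_, ⟨C 8 0 / s1, ?_⟩, ?_⟩
  · simp [c4]
  · simp [c5]
  · simp [c6]
  · funext k; fin_cases k
    · exact div_self n1
    · simp [hs2, e2]
    · simp [e1]
  · funext k; fin_cases k
    · simp
    · simp [e4]
    · have hz : C 7 0 ≠ 0 := e3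
      simp only [hs3, hs1]
      simp
      field_simp
  · intro i j k h0 h1 h2
    rw [← hC i j k h0 h1 h2]
    have : T3 C i j k = s1 * s2 * s3 *
        T3 (fun j => ![C j 0 / s1, C j 1 / s2, C j 2 / s3]) i j k := by
      simp only [T3, Matrix.cons_val]
      field_simp
    rw [this]
    simp [n1, n2, n3]

theorem exists_good (α : GaloisField 2 2) (hα : α ^ 2 = α + 1) {F : Type*} [Field F]
    (h : RealizesColumnMatroid (matI4D4P0 α) F) : ∃ x : F, Good x := by
  obtain ⟨N, ⟨p, q, s, n4, n5, n6⟩, n7, ⟨r, n8⟩, hN⟩ := exists_normal α hα h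
  have z : ∀ i j k : Fin 14, 0 < i ∧ i < j ∧ j < k ∧ pZero (pD 0 i j k) = true → T3 N i j k = 0 :=
    fun i j k h => (hN i j k h.1 h.2.1 h.2.2.1).2 h.2.2.2
  have nz : ∀ i j k : Fin 14, 0 < i ∧ i < j ∧ j < k ∧ pZero (pD 0 i j k) = false →
      T3 N i j k ≠ 0 :=
    fun i j k h => mt (hN i j k h.1 h.2.1 h.2.2.1).1 (by rw [h.2.2.2]; decide)
  -- zero and nonzero triples
  have a1 := nz 4 5 6 (by decide +kernel)
  have a2 := nz 4 5 8 (by decide +kernel)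
  have b1 := z 5 6 9 (by decide +kernel)
  have b2 := z 7 8 9 (by decide +kernel)
  have b3 := z 6 7 10 (by decide +kernel)
  have b4 := z 4 5 11 (by decide +kernel)
  have b5 := z 9 10 11 (by decide +kernel)
  have b6 := z 6 7 12 (by decide +kernel)
  have b7 := z 8 11 12 (by decide +kernel)
  have b8 := z 7 8 13 (by decide +kernel)
  have b9 := z 4 10 13 (by decide +kernel)
  have d0 := nz 4 5 10 (by decide +kernel)
  have d1 := nz 5 6 10 (by decide +kernel)
  have d2 := nz 4 9 10 (by decide +kernel)
  have d3 := nz 5 8 10 (by decide +kernel)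
  have d4 := nz 4 9 12 (by decide +kernel)
  have d5 := nz 6 11 13 (by decide +kernel)
  simp [T3, n4, n5, n6, n7, n8] at a1 a2 b1 b2 b3 b4 b5 b6 b7 b8 b9 d0 d1 d2 d3 d4 d5
  obtain ⟨hp, hq, hs⟩ := a1
  have hr := a2.2.2
  simp only [hp, hq, hs, false_or, not_false_eq_true, true_and] at b1 b3 b4 b6 b9 d0 d1 d2 d3 d4 d5
  generalize N 9 0 = m0 at *
  generalize N 9 1 = m at *
  generalize N 9 2 = m2 at *
  generalize N 10 0 = a at *
  generalize N 10 1 = b at *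
  generalize N 10 2 = c at *
  generalize N 11 0 = d at *
  generalize N 11 1 = e at *
  generalize N 11 2 = f at *
  generalize N 12 0 = g at *
  generalize N 12 1 = i at *
  generalize N 12 2 = k at *
  generalize N 13 0 = u at *
  generalize N 13 1 = v at *
  generalize N 13 2 = w at *
  subst b1 b4
  have hm2 : m2 = -m := by
    have : r * (m + m2) = 0 := by linear_combination b2
    have := (mul_eq_zero.1 this).resolve_left hr
    linear_combination this
  subst hm2
  have hb : b = -a := by linear_combination b3
  subst hb
  have hi : i = -g := by linear_combination b6
  subst hi
  have hm : m ≠ 0 := by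
    rintro rfl
    simp at d2
  have hu : u = -v - w := by
    have : r * (u + v + w) = 0 := by linear_combination b8
    have := (mul_eq_zero.1 this).resolve_left hr
    linear_combination this
  subst hu
  obtain ⟨x, rfl⟩ : ∃ x, a = -(x * c) := ⟨-a / c, by field_simp⟩
  have hv : v = x * w := by
    have : c * (v - x * w) = 0 := by linear_combination -b9
    have := (mul_eq_zero.1 this).resolve_left d0
    linear_combination this
  subst hv
  have hd : d = -(x * (d + e)) := by
    have : m * c * (d + x * (d + e)) = 0 := by linear_combination b5
    have := (mul_eq_zero.1 this).resolve_left (mul_ne_zero hm d0)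
    linear_combination this
  obtain ⟨t, ht⟩ : ∃ t, t = d + e := ⟨_, rfl⟩
  have hd' : d = -(x * t) := by rw [ht]; exact hd
  have he : e = (1 + x) * t := by linear_combination -ht - hd'
  subst hd' he
  have hw : t * w * (2 * x + 1) ≠ 0 := fun h0 => d5 (by linear_combination h0)
  have htt : t ≠ 0 := by
    rintro rfl
    simp at hw
  have hg : g = -((1 + x) * k) := by
    have : r * t * ((1 + x) * k + g) = 0 := by linear_combination b7
    have := (mul_eq_zero.1 this).resolve_left (mul_ne_zero hr htt)
    linear_combination this
  subst hg
  refine ⟨x, fun h0 => d1 ?_, fun h0 => d2 ?_, fun h0 => d3 ?_, fun h0 => d4 ?_, fun h0 => d5 ?_⟩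
  · rw [h0]; ring
  · linear_combination m * c * h0
  · linear_combination -(r * c) * h0
  · linear_combination m * k * h0
  · linear_combination t * w * h0

theorem card_of_good {F : Type*} [Field F] (x : F) (hx : Good x) :
    Infinite F ∨ Nat.card F = 4 ∨ 7 ≤ Nat.card F := by
  rcases finite_or_infinite F with hfin | hinf
  swap
  · exact Or.inl hinf
  right
  by_contra! hcon
  obtain ⟨h4, h7⟩ := hcon
  have := Fintype.ofFinite F
  rw [Nat.card_eq_fintype_card] at h4 h7
  obtain ⟨hx0, hx1, hx2, hx3, hx4⟩ := hx
  have hpp := FiniteField.isPrimePow_card F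
  have hpow := FiniteField.pow_card x
  have hcast : ((Fintype.card F : ℕ) : F) = 0 := Nat.cast_card_eq_zero F
  have hprod : x * (x - 1) * (x + 1) * (x + 2) * (2 * x + 1) ≠ 0 := by
    simp only [ne_eq, mul_eq_zero, not_or]
    exact ⟨⟨⟨⟨hx0, hx2⟩, hx1⟩, hx3⟩, hx4⟩
  generalize Fintype.card F = m at *
  interval_cases m
  · exact absurd hpp not_isPrimePow_zero
  · exact absurd hpp not_isPrimePow_one
  · apply hprod
    linear_combination (x + 1) * (x + 2) * (2 * x + 1) * hpow
  · apply hprod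
    linear_combination (x + 2) * (2 * x + 1) * hpow
  · exact h4 rfl
  · apply hprod
    push_cast at hcast
    linear_combination 2 * hpow + x * (x - 1) * (x + 1) * x * hcast
  · revert hpp
    rw [isPrimePow_nat_iff_bounded]
    decide

theorem good_of_card {F : Type*} [Field F]
    (h : Infinite F ∨ Nat.card F = 4 ∨ 7 ≤ Nat.card F) : ∃ x : F, Good x := by
  classical
  by_cases h2 : (2 : F) = 0
  · suffices hs : ∃ x : F, x ∉ ({0, 1} : Finset F) by
      obtain ⟨x, hx⟩ := hs
      simp only [Finset.mem_insert, Finset.mem_singleton, not_or] at hx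
      have h1 : x - 1 ≠ 0 := sub_ne_zero.2 hx.2
      refine ⟨x, hx.1, ?_, h1, by simpa [h2] using hx.1, by simp [h2]⟩
      intro h0
      apply h1
      linear_combination h0 - h2
    rcases h with h | h
    · exact Infinite.exists_notMem_finset _
    · have hfin : Finite F := Nat.finite_of_card_ne_zero (by omega)
      have := Fintype.ofFinite F
      rw [Nat.card_eq_fintype_card] at h
      have hc := Finset.card_le_two (a := (0 : F)) (b := 1)
      by_contra! hcon
      have := Finset.card_le_card (show (Finset.univ : Finset F) ⊆ {0, 1} from fun y _ => hcon y)
      rw [Finset.card_univ] at this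
      omega
  · suffices hs : ∃ x : F, x ∉ ({0, -1, 1, -2, -1 / 2} : Finset F) by
      obtain ⟨x, hx⟩ := hs
      simp only [Finset.mem_insert, Finset.mem_singleton, not_or] at hx
      obtain ⟨h0, h1, h3, h4, h5⟩ := hx
      refine ⟨x, h0, fun h => h1 (by linear_combination h), fun h => h3 (by linear_combination h),
        fun h => h4 (by linear_combination h), fun h => h5 ?_⟩
      field_simp
      linear_combination h
    rcases h with h | h
    · exact Infinite.exists_notMem_finset _
    · have hfin : Finite F := Nat.finite_of_card_ne_zero (by omega)
      have := Fintype.ofFinite F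
      rw [Nat.card_eq_fintype_card] at h
      have h7 : 7 ≤ Fintype.card F := by
        rcases h with h | h
        · exfalso
          have hcast : ((Fintype.card F : ℕ) : F) = 0 := Nat.cast_card_eq_zero F
          rw [h] at hcast
          push_cast at hcast
          apply h2
          have : (2 : F) * 2 = 0 := by linear_combination hcast
          simpa using this
        · exact h
      have hc := Finset.card_le_five (a := (0 : F)) (b := -1) (c := 1) (d := -2) (e := -1 / 2)
      by_contra! hcon
      have := Finset.card_le_card (show (Finset.univ : Finset F) ⊆ {0, -1, 1, -2, -1 / 2} from
        fun y _ => hcon y)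
      rw [Finset.card_univ] at this
      omega

/-- A field `F` realizes the column matroid of `[I₄ | D₄ | P₀]` iff `F` is infinite, has
exactly 4 elements, or has at least 7 elements (the universal partial field of this
matroid is the Pappus-template partial field `𝔓𝕋`). -/
theorem stmt_17 (α : GaloisField 2 2) (hα : α ^ 2 = α + 1) (F : Type*) [Field F] :
    RealizesColumnMatroid (matI4D4P0 α) F ↔
      (Infinite F ∨ Nat.card F = 4 ∨ 7 ≤ Nat.card F) := by
  constructor
  · intro h
    obtain ⟨x, hx⟩ := exists_good α hα h
    exact card_of_good x hx
  · intro h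
    obtain ⟨x, hx⟩ := good_of_card h
    exact realizes_of_good α hα x hx
end
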